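/- Let (r_1, r_2) be a consecutive pair of rows with supp(r_1) ⊆ supp(r_2) that fails the alternating sign condition (i.e. η(r_2) = (−1)^{C(r_1)+1} η(r_1)), and suppose C(r_2) ≥ 2·C(r_1). Let (r'_2, r'_1) be the result of the Case 2 row exchange. Then l(r'_1) = l(r_1), η(r'_1) = (−1)^{C(r_2)+1} η(r_1), l(r'_2) = l(r_2) + C(r_1), and η(r'_2) = (−1)^{C(r_1)} η(r_2). Moreover, the resulting pair (r'_2, r'_1) satisfies the alternating sign condition, i.e. η(r'_1) = (−1)^{C(r'_2)} η(r'_2). -/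

import Mathlib

/-- A row `r = (A, B, l, η)`: the data of an extended segment `([A, B], l, η)`
(with the constraints `B ≤ A` and `η ∈ {1, -1}` imposed as hypotheses via
`IsRow`). Its support is the integer interval `[B, A]`. -/
structure Row where
  A : ℤ
  B : ℤ
  l : ℤ
  eta : ℤ
deriving DecidableEq

instance : Inhabited Row := ⟨⟨0, 0, 0, 1⟩⟩

/-- `(-1)^n` for an integer `n` (only the parity of `n` matters). -/
def epow (n : ℤ) : ℤ := (-1) ^ n.natAbs

/-- `b(r) = A - B + 1`, the length of the support of `r`. -/
def Row.b (r : Row) : ℤ := r.A - r.B + 1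

/-- `C(r) = b(r) - 2l(r)`, the number of circles of `r`. -/
def Row.C (r : Row) : ℤ := r.b - 2 * r.l

/-- The defining constraints on a row: `B ≤ A` and `η ∈ {1, -1}`. -/
def IsRow (r : Row) : Prop := r.B ≤ r.A ∧ (r.eta = 1 ∨ r.eta = -1)

/-- The ordered pair of consecutive rows `(r₁, r₂)` satisfies the alternating
sign condition: `η(r₂) = (-1)^{C(r₁)} η(r₁)`. -/
def Alt (r₁ r₂ : Row) : Prop := r₂.eta = epow r₁.C * r₁.eta

/-- Case 1 row exchange of the consecutive pair `(r₁, r₂)` (for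
`supp(r₂) ⊆ supp(r₁)`); the result `(r₂', r₁')` is in the opposite order. -/
def exchange1 (r₁ r₂ : Row) : Row × Row :=
  let ε : ℤ := epow (r₁.A - r₁.B) * r₁.eta * r₂.eta
  let c₂ : ℤ := r₂.b - 2 * r₂.l
  let s₂ : Row := ⟨r₂.A, r₂.B, r₂.l, epow (r₁.A - r₁.B) * r₂.eta⟩
  let s₁ : Row :=
    if ε = 1 ∧ r₁.b - 2 * r₁.l < 2 * c₂ then
      ⟨r₁.A, r₁.B, r₁.b - (r₁.l + c₂), epow (r₂.A - r₂.B) * r₁.eta⟩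
    else if ε = 1 then
      ⟨r₁.A, r₁.B, r₁.l + c₂, epow (r₂.A - r₂.B + 1) * r₁.eta⟩
    else
      ⟨r₁.A, r₁.B, r₁.l - c₂, epow (r₂.A - r₂.B + 1) * r₁.eta⟩
  (s₂, s₁)

/-- Case 2 row exchange of the consecutive pair `(r₁, r₂)` (for
`supp(r₁) ⊆ supp(r₂)`); the result `(r₂', r₁')` is in the opposite order. -/
def exchange2 (r₁ r₂ : Row) : Row × Row :=
  let ε : ℤ := epow (r₁.A - r₁.B) * r₁.eta * r₂.eta
  let c₁ : ℤ := r₁.b - 2 * r₁.l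
  let s₁ : Row := ⟨r₁.A, r₁.B, r₁.l, epow (r₂.A - r₂.B) * r₁.eta⟩
  let s₂ : Row :=
    if ε = 1 ∧ r₂.b - 2 * r₂.l < 2 * c₁ then
      ⟨r₂.A, r₂.B, r₂.b - (r₂.l + c₁), epow (r₁.A - r₁.B) * r₂.eta⟩
    else if ε = 1 then
      ⟨r₂.A, r₂.B, r₂.l + c₁, epow (r₁.A - r₁.B + 1) * r₂.eta⟩
    else
      ⟨r₂.A, r₂.B, r₂.l - c₁, epow (r₁.A - r₁.B + 1) * r₂.eta⟩
  (s₂, s₁)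

theorem epow_congr {m n : ℤ} (h : m % 2 = n % 2) : epow m = epow n := by
  unfold epow
  rcases Int.emod_two_eq_zero_or_one m with hm | hm
  · rw [Even.neg_one_pow (Int.natAbs_even.2 (Int.even_iff.2 hm)),
      Even.neg_one_pow (Int.natAbs_even.2 (Int.even_iff.2 (h ▸ hm)))]
  · rw [Odd.neg_one_pow (Int.natAbs_odd.2 (Int.odd_iff.2 hm)),
      Odd.neg_one_pow (Int.natAbs_odd.2 (Int.odd_iff.2 (h ▸ hm)))]

theorem epow_cases (n : ℤ) :
    (epow n = 1 ∧ epow (n + 1) = -1) ∨ (epow n = -1 ∧ epow (n + 1) = 1) := by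
  unfold epow
  rcases Int.even_or_odd n with hm | hm
  · left
    exact ⟨Even.neg_one_pow (Int.natAbs_even.2 hm),
      Odd.neg_one_pow (Int.natAbs_odd.2 hm.add_one)⟩
  · right
    exact ⟨Odd.neg_one_pow (Int.natAbs_odd.2 hm),
      Even.neg_one_pow (Int.natAbs_even.2 hm.add_one)⟩

/-- Swap up (Lemma `swap up`): if `(r₁, r₂)` is a consecutive pair with
`supp(r₁) ⊆ supp(r₂)` failing the alternating sign condition, with
`C(r₂) ≥ 2·C(r₁)`, and `(r₂', r₁')` is the result of the Case 2 row exchange,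
then `l(r₁') = l(r₁)`, `η(r₁') = (−1)^{C(r₂)+1} η(r₁)`,
`l(r₂') = l(r₂) + C(r₁)`, `η(r₂') = (−1)^{C(r₁)} η(r₂)`, and the pair
`(r₂', r₁')` satisfies the alternating sign condition. -/
theorem swap_up (r₁ r₂ : Row) (h₁ : IsRow r₁) (h₂ : IsRow r₂)
    (hsupp : r₂.B ≤ r₁.B ∧ r₁.A ≤ r₂.A)
    (hfail : r₂.eta = epow (r₁.C + 1) * r₁.eta)
    (hC : 2 * r₁.C ≤ r₂.C) :
    let p := exchange2 r₁ r₂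
    p.2.l = r₁.l ∧
    p.2.eta = epow (r₂.C + 1) * r₁.eta ∧
    p.1.l = r₂.l + r₁.C ∧
    p.1.eta = epow r₁.C * r₂.eta ∧
    p.2.eta = epow p.1.C * p.1.eta := by
  obtain ⟨-, e1⟩ := h₁
  have a1 : epow (r₁.C + 1) = epow (r₁.A - r₁.B) :=
    epow_congr (by simp only [Row.C, Row.b]; omega)
  have a2 : epow r₁.C = epow (r₁.A - r₁.B + 1) :=
    epow_congr (by simp only [Row.C, Row.b]; omega)
  have a3 : epow (r₂.C + 1) = epow (r₂.A - r₂.B) :=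
    epow_congr (by simp only [Row.C, Row.b]; omega)
  rw [a1] at hfail
  have hε : epow (r₁.A - r₁.B) * r₁.eta * r₂.eta = 1 := by
    rw [hfail]
    rcases epow_cases (r₁.A - r₁.B) with ⟨h, -⟩ | ⟨h, -⟩ <;>
      rcases e1 with e | e <;> rw [h, e] <;> norm_num
  have hlt : ¬ (r₂.b - 2 * r₂.l < 2 * (r₁.b - 2 * r₁.l)) := by
    simp only [Row.C] at hC; omega
  have hp : exchange2 r₁ r₂ =
      (⟨r₂.A, r₂.B, r₂.l + r₁.C, epow (r₁.A - r₁.B + 1) * r₂.eta⟩,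
       ⟨r₁.A, r₁.B, r₁.l, epow (r₂.A - r₂.B) * r₁.eta⟩) := by
    simp only [exchange2]
    rw [if_neg (fun h => hlt h.2), if_pos hε]
    rfl
  rw [hp]
  refine ⟨rfl, ?_, rfl, ?_, ?_⟩
  · simp only [a3]
  · simp only [a2]
  · have a4 : epow (Row.C ⟨r₂.A, r₂.B, r₂.l + r₁.C, epow (r₁.A - r₁.B + 1) * r₂.eta⟩)
        = epow (r₂.A - r₂.B + 1) :=
      epow_congr (by simp only [Row.C, Row.b]; omega)
    simp only [a4]
    rw [hfail]
    rcases epow_cases (r₁.A - r₁.B) with ⟨h, h'⟩ | ⟨h, h'⟩ <;>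
      rcases epow_cases (r₂.A - r₂.B) with ⟨k, k'⟩ | ⟨k, k'⟩ <;>
      rw [h, h', k, k'] <;> ring
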